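/- Maximality of the last token: let s be a nonempty string, and let w be a non-atomic canonical token that is a suffix of s with suc(w) = θ(s). Then w does not satisfy the Prefix Last-Token Condition with respect to s; in other words, the answer node θ(s) has no children satisfying the condition. -/

import Mathlib

/-!
Common BPE formalization preamble.

A token is a (nonempty) string over the alphabet `α`, modeled as `List α`.
A merge rule is a pair of tokens; a dictionary is an ordered list of rules
(earlier rules have strictly higher priority).
-/

namespace BPE

variable {α : Type*} [DecidableEq α]

/-- A token is a string over the alphabet (nonemptiness is imposed by hypotheses). -/
abbrev Token (α : Type*) := List α

/-- A merge rule is an ordered pair of tokens. -/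
abbrev Rule (α : Type*) := Token α × Token α

/-- A dictionary is an ordered list of merge rules; earlier = higher priority. -/
abbrev Dict (α : Type*) := List (Rule α)

/-- Apply a single merge rule to a token list, scanning left to right and replacing
each adjacent occurrence of `r.1` followed by `r.2` by the concatenated token,
resuming the scan after the newly formed token (no overlaps). -/
def applyRule (r : Rule α) : List (Token α) → List (Token α)
  | [] => []
  | [t] => [t]
  | t :: u :: rest =>
      if t = r.1 ∧ u = r.2 then (r.1 ++ r.2) :: applyRule r rest
      else t :: applyRule r (u :: rest)

/-- `φ₀(s)`: the list of single-character tokens of `s`. -/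
def phi0 (s : List α) : List (Token α) := s.map (fun c => [c])

/-- `φ_k(s)`: the token list after applying the first `k` rules of `D` to `s`. -/
def phiK (D : Dict α) (k : ℕ) (s : List α) : List (Token α) :=
  (D.take k).foldl (fun φ r => applyRule r φ) (phi0 s)

/-- The BPE tokenization `𝕋_D(s)`. -/
def tokenize (D : Dict α) (s : List α) : List (Token α) :=
  phiK D D.length s

/-- Detokenization `π`: concatenation of the tokens. -/
def detok (φ : List (Token α)) : List α := φ.flatten

/-- A dictionary is valid if all rule components are genuine (nonempty) tokens. -/
def ValidDict (D : Dict α) : Prop := ∀ r ∈ D, r.1 ≠ [] ∧ r.2 ≠ []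

/-- A token `t` is canonical if `𝕋_D(t) = [t]`. -/
def IsCanonical (D : Dict α) (t : Token α) : Prop := tokenize D t = [t]

/-- The last token `θ(s)`: last element of `𝕋_D(s)` (defaulting to `[]`). -/
def theta (D : Dict α) (s : List α) : Token α := (tokenize D s).getLastD []

/-- `j` (0-based) is the index of the canonical rule of `t`:
`φ_j(t)` has exactly two tokens and `φ_{j+1}(t) = [t]`. -/
def IsCanonicalRuleIdx (D : Dict α) (t : Token α) (j : ℕ) : Prop :=
  j < D.length ∧ (phiK D j t).length = 2 ∧ phiK D (j + 1) t = [t]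

open Classical in
/-- The (0-based) index of the canonical rule of `t` (junk value `0` if none exists). -/
noncomputable def canonIdx (D : Dict α) (t : Token α) : ℕ :=
  if h : ∃ j, IsCanonicalRuleIdx D t j then h.choose else 0

/-- Predecessor `pre(t)`: first token of the two-token stage `φ_{j-1}(t)`. -/
noncomputable def pre (D : Dict α) (t : Token α) : Token α :=
  (phiK D (canonIdx D t) t).headD []

/-- Successor `suc(t)`: second token of the two-token stage `φ_{j-1}(t)`. -/
noncomputable def suc (D : Dict α) (t : Token α) : Token α :=
  (phiK D (canonIdx D t) t).getLastD []

/-- `InPath D x a` means `a ∈ P(x)`: `a` is obtained from `x` by iterating `suc`,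
i.e. `a` lies on the ancestor path of `x` in the Successor Forest. -/
def InPath (D : Dict α) (x a : Token α) : Prop :=
  ∃ n : ℕ, (suc D)^[n] x = a

/-- `s` with the suffix `u` removed. -/
def dropSuffix (s u : List α) : List α := s.take (s.length - u.length)

/-- The Prefix Last-Token Condition of the canonical suffix token `t`
with respect to the string `s`. Atomic tokens satisfy it by definition;
a non-atomic token must satisfy Reachability and Priority dominance. -/
def PLTC (D : Dict α) (s t : Token α) : Prop :=
  t.length = 1 ∨
    (1 < t.length ∧
      InPath D (theta D (dropSuffix s (suc D t))) (pre D t) ∧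
      (theta D (dropSuffix s (suc D t)) ≠ pre D t →
        ∀ u : Token α, 1 < u.length → IsCanonical D u → suc D u = pre D t →
          InPath D (theta D (dropSuffix s (suc D t))) u →
          canonIdx D t < canonIdx D u))

/-!
If `w` met the condition, then right after the canonical rule `(x, y)` of `w` has been applied, `x`
would be the last token of `s` with `y = suc w` removed: priority dominance keeps `x` intact for
long enough inside the last token of that prefix. As `y = θ(s)`, no merge ever crosses the boundary
between the prefix and `y`, so `x` and `y` would be adjacent in the token list of `s` at that stage.
But the output of a rule `(x, y)` never contains `x` followed by `y`.
-/

section ApplyRule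

variable {r : Rule α} {L : List (Token α)} {t : Token α}

theorem flatten_applyRule (r : Rule α) (L : List (Token α)) :
    (applyRule r L).flatten = L.flatten := by
  fun_induction applyRule r L <;> simp_all

theorem applyRule_ne_nil (hL : L ≠ []) : applyRule r L ≠ [] := by
  fun_induction applyRule r L <;> simp_all

theorem applyRule_of_length_le_one (hL : L.length ≤ 1) : applyRule r L = L := by
  match L, hL with
  | [], _ => rfl
  | [_], _ => rfl

theorem applyRule_eq_singleton (h : applyRule r L = [t]) : L = [t] ∨ L = [r.1, r.2] := by
  match L with
  | [] => simp [applyRule] at h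
  | [u] => exact .inl h
  | a :: b :: L =>
    rw [applyRule] at h
    split_ifs at h with hab
    · have hL : L = [] := by
        by_contra hL
        exact applyRule_ne_nil hL (List.cons.inj h).2
      exact .inr (by rw [hab.1, hab.2, hL])
    · exact absurd (List.cons.inj h).2 (applyRule_ne_nil (List.cons_ne_nil b L))

theorem exists_append_of_applyRule_eq_append {A B : List (Token α)} (h : applyRule r L = A ++ B) :
    ∃ A' B', L = A' ++ B' ∧ applyRule r A' = A ∧ applyRule r B' = B := by
  induction A generalizing L with
  | nil => exact ⟨[], L, rfl, rfl, h⟩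
  | cons a A ih =>
    match L with
    | [] => simp [applyRule] at h
    | [t] =>
      obtain ⟨rfl, rfl, rfl⟩ : t = a ∧ A = [] ∧ B = [] := by simpa [applyRule] using h
      exact ⟨[t], [], rfl, rfl, rfl⟩
    | t :: u :: L =>
      rw [applyRule] at h
      split_ifs at h with htu
      · obtain ⟨rfl, hL⟩ := List.cons.inj h
        obtain ⟨A', B', rfl, hA, hB⟩ := ih hL
        exact ⟨t :: u :: A', B', rfl, by rw [applyRule, if_pos htu, hA], hB⟩
      · obtain ⟨rfl, hL⟩ := List.cons.inj h
        obtain ⟨A', B', huL, hA, hB⟩ := ih hL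
        refine ⟨t :: A', B', by rw [huL, List.cons_append], ?_, hB⟩
        cases A' with
        | nil => rw [← hA]; rfl
        | cons v A' =>
          obtain rfl : u = v := (List.cons.inj huL).1
          rw [applyRule, if_neg htu, hA]

theorem applyRule_ne_pair (h₁ : r.1 ≠ []) (h₂ : r.2 ≠ []) : applyRule r L ≠ [r.1, r.2] := by
  intro h
  obtain ⟨A, B, rfl, hA, hB⟩ :=
    exists_append_of_applyRule_eq_append (A := [r.1]) (B := [r.2]) h
  have hA' : A = [r.1] := (applyRule_eq_singleton hA).resolve_right fun hA' => by
    simpa [hA', h₂] using (flatten_applyRule r A).symm.trans (congrArg List.flatten hA)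
  have hB' : B = [r.2] := (applyRule_eq_singleton hB).resolve_right fun hB' => by
    simpa [hB', h₁] using (flatten_applyRule r B).symm.trans (congrArg List.flatten hB)
  simp [hA', hB', applyRule] at h

theorem not_pair_infix_applyRule (h₁ : r.1 ≠ []) (h₂ : r.2 ≠ []) :
    ¬ [r.1, r.2] <:+: applyRule r L := by
  rintro ⟨A, B, h⟩
  obtain ⟨L', -, -, hL', -⟩ := exists_append_of_applyRule_eq_append h.symm
  obtain ⟨-, M, -, -, hM⟩ := exists_append_of_applyRule_eq_append hL'
  exact applyRule_ne_pair h₁ h₂ hM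

end ApplyRule

section ApplyRules

variable {E : Dict α} {L A B : List (Token α)}

/-- The effect of a whole list of rules on an arbitrary token list, so that each `φ_k(s)` is
obtained from every earlier `φ_j(s)` by a list of rules. -/
def applyRules (E : Dict α) (L : List (Token α)) : List (Token α) :=
  E.foldl (fun φ r => applyRule r φ) L

theorem flatten_applyRules (E : Dict α) (L : List (Token α)) :
    (applyRules E L).flatten = L.flatten := by
  induction E generalizing L with
  | nil => rfl
  | cons r E ih => exact (ih _).trans (flatten_applyRule r L)

theorem applyRules_of_length_le_one (hL : L.length ≤ 1) : applyRules E L = L := by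
  induction E with
  | nil => rfl
  | cons r E ih =>
    rw [applyRules, List.foldl_cons, applyRule_of_length_le_one hL]
    exact ih

theorem exists_append_of_applyRules_eq_append (h : applyRules E L = A ++ B) :
    ∃ A' B', L = A' ++ B' ∧ applyRules E A' = A ∧ applyRules E B' = B := by
  induction E generalizing L with
  | nil => exact ⟨A, B, h, rfl, rfl⟩
  | cons r E ih =>
    obtain ⟨A₁, B₁, h₁, hA, hB⟩ := ih h
    obtain ⟨A', B', hL, rfl, rfl⟩ := exists_append_of_applyRule_eq_append h₁
    exact ⟨A', B', hL, hA, hB⟩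

end ApplyRules

section Stages

variable {D : Dict α} {j k : ℕ} {s : List α} {A B : List (Token α)} {t : Token α}

theorem phiK_succ {r : Rule α} (hr : D[k]? = some r) (s : List α) :
    phiK D (k + 1) s = applyRule r (phiK D k s) := by
  simp [phiK, List.take_add_one, hr]

theorem phiK_eq_applyRules (D : Dict α) (hjk : j ≤ k) (s : List α) :
    phiK D k s = applyRules ((D.take k).drop j) (phiK D j s) := by
  have htake : D.take k = D.take j ++ (D.take k).drop j := by
    conv_lhs => rw [← List.take_append_drop j (D.take k), List.take_take, min_eq_left hjk]
  conv_lhs => rw [phiK, htake, List.foldl_append]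
  rfl

theorem flatten_phiK (D : Dict α) (k : ℕ) (s : List α) : (phiK D k s).flatten = s := by
  refine (flatten_applyRules _ _).trans ?_
  induction s with
  | nil => rfl
  | cons a s ih => exact congrArg (a :: ·) ih

theorem phiK_of_length_le_one (ht : t.length ≤ 1) : phiK D k t = phi0 t :=
  applyRules_of_length_le_one (by simpa [phi0] using ht)

theorem phiK_eq_singleton_of_le (hjk : j ≤ k) (h : phiK D j t = [t]) : phiK D k t = [t] := by
  rw [phiK_eq_applyRules D hjk, h, applyRules_of_length_le_one (by simp)]

theorem phiK_flatten_of_eq_append (h : phiK D k s = A ++ B) :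
    phiK D k A.flatten = A ∧ phiK D k B.flatten = B := by
  obtain ⟨A', B', hs, rfl, rfl⟩ := exists_append_of_applyRules_eq_append h
  obtain ⟨a, b, rfl, rfl, rfl⟩ := List.map_eq_append_iff.1 hs
  exact ⟨congrArg (phiK D k) (flatten_phiK D k a), congrArg (phiK D k) (flatten_phiK D k b)⟩

theorem phiK_eq_singleton_of_mem (ht : t ∈ phiK D k s) : phiK D k t = [t] := by
  obtain ⟨A, B, h⟩ := List.append_of_mem ht
  have htB : phiK D k (t :: B).flatten = [t] ++ B := (phiK_flatten_of_eq_append h).2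
  simpa using (phiK_flatten_of_eq_append htB).1

theorem ne_nil_of_mem_phiK (ht : t ∈ phiK D k s) : t ≠ [] := by
  rintro rfl
  simpa [phiK_of_length_le_one, phi0] using phiK_eq_singleton_of_mem ht

end Stages

section Separated

variable {D : Dict α} {i k : ℕ} {a b : List α}

/-- The boundary between `a` and `b` in the string `ab` is crossed by none of the merges made by the
first `k` rules of `D`, so that `φ_k(ab)` is `φ_k(a)` followed by `φ_k(b)`. -/
def Separated (D : Dict α) (k : ℕ) (a b : List α) : Prop :=
  phiK D k (a ++ b) = phiK D k a ++ phiK D k b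

theorem separated_of_phiK_eq_append {s : List α} {A B : List (Token α)}
    (h : phiK D k s = A ++ B) : Separated D k A.flatten B.flatten := by
  obtain ⟨hA, hB⟩ := phiK_flatten_of_eq_append h
  rw [Separated, hA, hB, ← List.flatten_append, ← h, flatten_phiK]

theorem Separated.of_le (hik : i ≤ k) (h : Separated D k a b) : Separated D i a b := by
  rw [Separated, phiK_eq_applyRules D hik] at h
  obtain ⟨A, B, hi, hA, hB⟩ := exists_append_of_applyRules_eq_append h
  have hAa : A.flatten = a := by rw [← flatten_applyRules, hA, flatten_phiK]
  have hBb : B.flatten = b := by rw [← flatten_applyRules, hB, flatten_phiK]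
  simpa only [hAa, hBb] using separated_of_phiK_eq_append hi

theorem Separated.phiK_suffix (h : Separated D k a b) : phiK D k b <:+ phiK D k (a ++ b) :=
  ⟨phiK D k a, h.symm⟩

theorem not_separated_succ {x y : Token α} (hr : D[k]? = some (x, y))
    (hx : [x] <:+ phiK D (k + 1) a) (hy : [y] <+: phiK D (k + 1) b) :
    ¬ Separated D (k + 1) a b := by
  intro h
  have hx₀ : x ≠ [] := ne_nil_of_mem_phiK (hx.subset (List.mem_singleton_self x))
  have hy₀ : y ≠ [] := ne_nil_of_mem_phiK (hy.subset (List.mem_singleton_self y))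
  obtain ⟨A, hA⟩ := hx
  obtain ⟨B, hB⟩ := hy
  refine not_pair_infix_applyRule (r := (x, y)) (L := phiK D k (a ++ b)) hx₀ hy₀ ⟨A, B, ?_⟩
  rw [← phiK_succ hr, h, ← hA, ← hB]
  simp only [List.append_assoc, List.cons_append, List.nil_append]

end Separated

section CanonicalRule

variable {D : Dict α} {t : Token α}

theorem IsCanonical.exists_isCanonicalRuleIdx (ht : IsCanonical D t) (hl : 1 < t.length) :
    ∃ j, IsCanonicalRuleIdx D t j := by
  obtain ⟨k, hk, hmin⟩ : ∃ k, phiK D k t = [t] ∧ ∀ m < k, phiK D m t ≠ [t] := by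
    classical
    have hex : ∃ k, phiK D k t = [t] := ⟨D.length, ht⟩
    exact ⟨Nat.find hex, Nat.find_spec hex, fun _ => Nat.find_min hex⟩
  cases k with
  | zero => exact absurd (congrArg List.length hk) (by simpa [phiK, phi0] using hl.ne')
  | succ j =>
    have hj : j < D.length := not_le.1 fun hle => hmin _ (Nat.lt_succ_of_le hle) ht
    have hpair := applyRule_eq_singleton
      ((phiK_succ (List.getElem?_eq_getElem hj) t).symm.trans hk)
    exact ⟨j, hj, by rw [hpair.resolve_left (hmin j j.lt_succ_self)]; rfl, hk⟩

theorem IsCanonical.isCanonicalRuleIdx_canonIdx (ht : IsCanonical D t) (hl : 1 < t.length) :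
    IsCanonicalRuleIdx D t (canonIdx D t) := by
  have h := ht.exists_isCanonicalRuleIdx hl
  rw [canonIdx, dif_pos h]
  exact h.choose_spec

theorem IsCanonical.canonIdx_lt_length (ht : IsCanonical D t) (hl : 1 < t.length) :
    canonIdx D t < D.length :=
  (ht.isCanonicalRuleIdx_canonIdx hl).1

theorem IsCanonical.phiK_canonIdx (ht : IsCanonical D t) (hl : 1 < t.length) :
    phiK D (canonIdx D t) t = [pre D t, suc D t] := by
  obtain ⟨x, y, hxy⟩ := List.length_eq_two.1 (ht.isCanonicalRuleIdx_canonIdx hl).2.1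
  simp [pre, suc, hxy]

theorem IsCanonical.getElem?_canonIdx (ht : IsCanonical D t) (hl : 1 < t.length) :
    D[canonIdx D t]? = some (pre D t, suc D t) := by
  have hr := List.getElem?_eq_getElem (ht.canonIdx_lt_length hl)
  have h := (phiK_succ hr t).symm.trans (ht.isCanonicalRuleIdx_canonIdx hl).2.2
  rw [ht.phiK_canonIdx hl] at h
  obtain h | h := applyRule_eq_singleton h
  · simp at h
  · simp_all

theorem IsCanonical.pre_append_suc (ht : IsCanonical D t) (hl : 1 < t.length) :
    pre D t ++ suc D t = t := by
  simpa [ht.phiK_canonIdx hl] using flatten_phiK D (canonIdx D t) t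

theorem IsCanonical.phiK_canonIdx_pre (ht : IsCanonical D t) (hl : 1 < t.length) :
    phiK D (canonIdx D t) (pre D t) = [pre D t] :=
  phiK_eq_singleton_of_mem (s := t) (by simp [ht.phiK_canonIdx hl])

theorem IsCanonical.phiK_canonIdx_suc (ht : IsCanonical D t) (hl : 1 < t.length) :
    phiK D (canonIdx D t) (suc D t) = [suc D t] :=
  phiK_eq_singleton_of_mem (s := t) (by simp [ht.phiK_canonIdx hl])

theorem IsCanonical.length_suc_lt (ht : IsCanonical D t) (hl : 1 < t.length) :
    (suc D t).length < t.length := by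
  have hpre : pre D t ≠ [] :=
    ne_nil_of_mem_phiK (D := D) (k := canonIdx D t) (s := t) (by simp [ht.phiK_canonIdx hl])
  have hlen := congrArg List.length (ht.pre_append_suc hl)
  rw [List.length_append] at hlen
  have := List.length_pos_of_ne_nil hpre
  omega

theorem IsCanonical.separated_pre_suc (ht : IsCanonical D t) (hl : 1 < t.length) :
    Separated D (canonIdx D t) (pre D t) (suc D t) := by
  simpa using separated_of_phiK_eq_append (A := [pre D t]) (B := [suc D t]) (ht.phiK_canonIdx hl)

theorem IsCanonical.phiK_suc_suffix {i : ℕ} (ht : IsCanonical D t) (hl : 1 < t.length)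
    (hi : i ≤ canonIdx D t) : phiK D i (suc D t) <:+ phiK D i t := by
  simpa only [ht.pre_append_suc hl] using ((ht.separated_pre_suc hl).of_le hi).phiK_suffix

theorem suc_of_length_le_one (ht : t.length ≤ 1) : suc D t = t := by
  rw [suc, phiK_of_length_le_one ht]
  match t, ht with
  | [], _ => rfl
  | [_], _ => rfl

protected theorem IsCanonical.suc (ht : IsCanonical D t) : IsCanonical D (suc D t) := by
  obtain hl | hl := lt_or_ge 1 t.length
  · exact phiK_eq_singleton_of_le (ht.canonIdx_lt_length hl).le (ht.phiK_canonIdx_suc hl)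
  · rwa [suc_of_length_le_one hl]

theorem IsCanonical.canonIdx_suc_lt (ht : IsCanonical D t) (hl : 1 < t.length)
    (hl' : 1 < (suc D t).length) : canonIdx D (suc D t) < canonIdx D t := by
  by_contra! hle
  have h := phiK_eq_singleton_of_le hle (ht.phiK_canonIdx_suc hl)
  simp [ht.suc.phiK_canonIdx hl'] at h

end CanonicalRule

section AncestorPath

variable {D : Dict α} {z v : Token α}

theorem IsCanonical.of_inPath (hz : IsCanonical D z) (hv : InPath D z v) : IsCanonical D v := by
  obtain ⟨n, rfl⟩ := hv
  induction n with
  | zero => exact hz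
  | succ n ih => rw [Function.iterate_succ_apply']; exact ih.suc

theorem InPath.exists_child (hv : InPath D z v) (hne : z ≠ v) :
    ∃ u, 1 < u.length ∧ suc D u = v ∧ InPath D z u := by
  obtain ⟨n, rfl⟩ := hv
  induction n with
  | zero => exact absurd rfl hne
  | succ n ih =>
    rw [Function.iterate_succ_apply'] at hne ⊢
    obtain hl | hl := lt_or_ge 1 ((suc D)^[n] z).length
    · exact ⟨_, hl, rfl, n, rfl⟩
    · rw [suc_of_length_le_one hl] at hne ⊢
      exact ih hne

theorem IsCanonical.phiK_suffix_of_inPath {i : ℕ} (hz : IsCanonical D z) (hv : InPath D z v)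
    (hl : 1 < v.length) (hi : i ≤ canonIdx D v) : phiK D i v <:+ phiK D i z := by
  obtain ⟨n, rfl⟩ := hv
  induction n with
  | zero => exact List.suffix_rfl
  | succ n ih =>
    have hu : IsCanonical D ((suc D)^[n] z) := hz.of_inPath ⟨n, rfl⟩
    rw [Function.iterate_succ_apply'] at hl hi ⊢
    obtain hul | hul := lt_or_ge 1 ((suc D)^[n] z).length
    · have hiu := hi.trans (hu.canonIdx_suc_lt hul hl).le
      exact (hu.phiK_suc_suffix hul hiu).trans (ih hul hiu)
    · rw [suc_of_length_le_one hul] at hl hi ⊢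
      exact ih hl hi

end AncestorPath

section LastToken

variable {D : Dict α} {s : List α}

theorem dropLast_tokenize_append_theta (D : Dict α) (hs : s ≠ []) :
    (tokenize D s).dropLast ++ [theta D s] = tokenize D s := by
  have hne : tokenize D s ≠ [] := fun h => hs <| by
    rw [← flatten_phiK D D.length s, ← tokenize, h, List.flatten_nil]
  rw [theta, List.getLastD_eq_getLast?, List.getLast?_eq_getLast_of_ne_nil hne, Option.getD_some,
    List.dropLast_append_getLast hne]

theorem isCanonical_theta (D : Dict α) (hs : s ≠ []) : IsCanonical D (theta D s) :=
  phiK_eq_singleton_of_mem (s := s) <| by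
    rw [← tokenize, ← dropLast_tokenize_append_theta D hs]
    exact List.mem_append_right _ (List.mem_singleton_self _)

theorem flatten_dropLast_tokenize_append_theta (D : Dict α) (hs : s ≠ []) :
    (tokenize D s).dropLast.flatten ++ theta D s = s := by
  conv_rhs => rw [← flatten_phiK D D.length s, ← tokenize, ← dropLast_tokenize_append_theta D hs]
  simp

theorem dropSuffix_append_theta (D : Dict α) (hs : s ≠ []) :
    dropSuffix s (theta D s) ++ theta D s = s :=
  List.suffix_iff_eq_append.1 ⟨_, flatten_dropLast_tokenize_append_theta D hs⟩

theorem separated_dropSuffix_theta (D : Dict α) (hs : s ≠ []) :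
    Separated D D.length (dropSuffix s (theta D s)) (theta D s) := by
  have hdrop : (tokenize D s).dropLast.flatten = dropSuffix s (theta D s) :=
    List.append_cancel_right <|
      (flatten_dropLast_tokenize_append_theta D hs).trans (dropSuffix_append_theta D hs).symm
  have hsep := separated_of_phiK_eq_append (dropLast_tokenize_append_theta D hs).symm
  rwa [hdrop, List.flatten_singleton] at hsep

theorem phiK_theta_suffix {i : ℕ} (hs : s ≠ []) (hi : i ≤ D.length) :
    phiK D i (theta D s) <:+ phiK D i s := by
  simpa only [dropSuffix_append_theta D hs] using
    ((separated_dropSuffix_theta D hs).of_le hi).phiK_suffix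

end LastToken

theorem PLTC.singleton_pre_suffix {D : Dict α} {s w : Token α} (h : PLTC D s w)
    (hl : 1 < w.length) (hw : IsCanonical D w) (hs : dropSuffix s (suc D w) ≠ []) :
    [pre D w] <:+ phiK D (canonIdx D w + 1) (dropSuffix s (suc D w)) := by
  obtain ⟨-, hreach, hdom⟩ := h.resolve_left hl.ne'
  have hθ := isCanonical_theta D hs
  refine .trans ?_ (phiK_theta_suffix hs (hw.canonIdx_lt_length hl))
  rw [← phiK_eq_singleton_of_le (Nat.le_succ _) (hw.phiK_canonIdx_pre hl)]
  by_cases heq : theta D (dropSuffix s (suc D w)) = pre D w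
  · rw [heq]
  · obtain ⟨u, hul, hu, hpath⟩ := hreach.exists_child heq
    have huc := hθ.of_inPath hpath
    have hlt := hdom heq u hul huc hu hpath
    rw [← hu]
    exact (huc.phiK_suc_suffix hul hlt).trans (hθ.phiK_suffix_of_inPath hpath hul hlt)

theorem last_token_maximal_general (D : Dict α) (s : List α) (w : Token α) (hwl : 1 < w.length)
    (hwc : IsCanonical D w) (hws : w <:+ s) (hsuc : suc D w = theta D s) : ¬ PLTC D s w := by
  intro h
  have hlen : (suc D w).length < s.length := (hwc.length_suc_lt hwl).trans_le hws.length_le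
  have hs : s ≠ [] := List.ne_nil_of_length_pos (by omega)
  have hprefix : dropSuffix s (suc D w) ≠ [] :=
    List.ne_nil_of_length_pos (by rw [dropSuffix, List.length_take]; omega)
  have hsep : Separated D (canonIdx D w + 1) (dropSuffix s (suc D w)) (suc D w) :=
    (hsuc ▸ separated_dropSuffix_theta D hs).of_le (hwc.canonIdx_lt_length hwl)
  have hsucw : phiK D (canonIdx D w + 1) (suc D w) = [suc D w] :=
    phiK_eq_singleton_of_le (Nat.le_succ _) (hwc.phiK_canonIdx_suc hwl)
  exact not_separated_succ (hwc.getElem?_canonIdx hwl) (h.singleton_pre_suffix hwl hwc hprefix)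
    (hsucw ▸ List.prefix_rfl) hsep

/-- **Maximality of the last token.** No non-atomic canonical suffix token `w` of `s`
with `suc w = θ(s)` (i.e., no child of the answer node `θ(s)`) satisfies the
Prefix Last-Token Condition with respect to `s`. -/
theorem last_token_maximal [Fintype α] (D : Dict α) (hD : ValidDict D)
    (s : List α) (hs : s ≠ [])
    (w : Token α) (hwl : 1 < w.length) (hwc : IsCanonical D w) (hws : w <:+ s)
    (hsuc : suc D w = theta D s) :
    ¬ PLTC D s w := by
  exact last_token_maximal_general D s w hwl hwc hws hsuc

end BPE
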